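/- Let (P_k(ε) : k ≥ 1, ε > 0) be a family of stochastic matrices on S. Assume there exist l ≥ 1, scalars s > 0 and δ > 0, and matrices P̃ and P̃⁽¹⁾ such that (i) sup_{1 ≤ i ≤ (log(1/ε))^{1+δ}} ‖P_i(ε) − (P̃ + ε(i−1)P̃⁽¹⁾)‖ = O(ε²(log(1/ε))^s) as ε↓0, and (ii) sup_{k ≥ 0, ε > 0} ‖B_{k+1}(ε)B_{k+2}(ε)⋯B_{k+l}(ε)‖ < 1. Let B̃ = (P̃(x,y) : x,y ∈ C), B̃⁽¹⁾ = (P̃⁽¹⁾(x,y) : x,y ∈ C), r̃ the column vector on C with r̃(x) = r(x) + Σ_{y∈C^c} P̃(x,y)r(y), and r̃⁽¹⁾ the column vector on C with r̃⁽¹⁾(x) = Σ_{y∈C^c} P̃⁽¹⁾(x,y)r(y). Then I − B̃ is invertible and there exists w < ∞ such that δ(ε) = μ(I − B̃)^{−1} r̃ + ε μ B̃ (I − B̃)^{−2} B̃⁽¹⁾ (I − B̃)^{−1} r̃ + ε μ B̃ (I − B̃)^{−2} r̃⁽¹⁾ + O(ε²(log(1/ε))^w) as ε↓0. -/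

import Mathlib

open Matrix Topology Filter

/-- The matrix norm ‖A‖ = max_x Σ_y |A(x,y)|. -/
noncomputable def matNorm {T : Type*} [Fintype T] (A : Matrix T T ℝ) : ℝ :=
  ⨆ x, ∑ y, |A x y|

/-- A square matrix is stochastic if all entries are nonnegative and every row sums to 1. -/
def IsStochastic {T : Type*} [Fintype T] (P : Matrix T T ℝ) : Prop :=
  (∀ x y, 0 ≤ P x y) ∧ ∀ x, ∑ y, P x y = 1

/-- The ordered product P 1 * P 2 * ⋯ * P j. -/
noncomputable def prodP {T : Type*} [Fintype T] [DecidableEq T]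
    (P : ℕ → Matrix T T ℝ) (j : ℕ) : Matrix T T ℝ :=
  ((List.range j).map fun i => P (i + 1)).prod

/-- Principal submatrix of P corresponding to "C to C" transitions. -/
def subB {S : Type*} (C : Set S) (P : Matrix S S ℝ) : Matrix C C ℝ :=
  Matrix.of fun x y => P x.1 y.1

/-- The column vector on C with entries r(x) + Σ_{y ∈ Cᶜ} P(x,y) r(y). -/
noncomputable def rC {S : Type*} [Fintype S] (C : Set S) [DecidablePred (· ∈ C)]
    (r : S → ℝ) (P : Matrix S S ℝ) : C → ℝ :=
  fun x => r x.1 + ∑ y ∈ Finset.univ.filter (fun y => y ∉ C), P x.1 y * r y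

/-- The expected reward cumulated to the hitting time of Cᶜ:
δ = Σ_{j=0}^∞ μ (B₁⋯B_j) r_{j+1}. -/
noncomputable def deltaReward {S : Type*} [Fintype S] [DecidableEq S]
    (C : Set S) [DecidablePred (· ∈ C)]
    (μ : C → ℝ) (r : S → ℝ) (P : ℕ → Matrix S S ℝ) : ℝ :=
  ∑' j : ℕ, μ ⬝ᵥ (prodP (fun k => subB C (P k)) j *ᵥ rC C r (P (j + 1)))

/-!
The reward still to be cumulated at time `j` solves the backward recursion
`v_j = r_{j+1} + B_{j+1} v_{j+1}`. To first order in `ε` it is `v_j = a + ε (j p + q)`, with `a`,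
`p`, `q` obtained by matching the terms of order `1`, `ε j` and `ε`. This ansatz violates the
recursion by `O(ε² log(1/ε)^s (j + 1)²)` as long as `j` is below `log(1/ε)^(1+δ)`. Beyond that index
only polynomial growth is known, but there the geometric decay of `B_1 ⋯ B_j` is already `O(ε²)`.
Summing the violations against this decay bounds the distance from `a + ε q` to the cumulated
reward.
-/

section

open Asymptotics
open scoped Matrix.Norms.Operator

lemma tendsto_log_one_div_nhdsGT_zero :
    Tendsto (fun ε : ℝ => Real.log (1 / ε)) (𝓝[>] 0) atTop := by
  simpa only [one_div, Function.comp_def] using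
    Real.tendsto_log_atTop.comp (tendsto_inv_nhdsGT_zero (𝕜 := ℝ))

lemma exp_neg_two_mul_log_one_div {ε : ℝ} (hε : 0 < ε) :
    Real.exp (-2 * Real.log (1 / ε)) = ε ^ 2 := by
  rw [one_div, Real.log_inv, neg_mul_neg, ← Nat.cast_two, ← Real.log_pow,
    Real.exp_log (by positivity)]

lemma tendsto_sq_mul_log_one_div_rpow (s : ℝ) :
    Tendsto (fun ε : ℝ => ε ^ 2 * Real.log (1 / ε) ^ s) (𝓝[>] 0) (𝓝 0) := by
  refine ((tendsto_rpow_mul_exp_neg_mul_atTop_nhds_zero s 2 two_pos).comp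
    tendsto_log_one_div_nhdsGT_zero).congr' ?_
  filter_upwards [self_mem_nhdsWithin] with ε hε
  rw [Function.comp_apply, exp_neg_two_mul_log_one_div hε, mul_comm]

lemma eventually_sq_le_sq_mul_log_one_div_rpow {s : ℝ} (hs : 0 ≤ s) :
    ∀ᶠ ε : ℝ in 𝓝[>] 0, ε ^ 2 ≤ ε ^ 2 * Real.log (1 / ε) ^ s := by
  filter_upwards [tendsto_log_one_div_nhdsGT_zero.eventually_ge_atTop 1] with ε hlog
  exact le_mul_of_one_le_right (sq_nonneg ε) (Real.one_le_rpow hlog hs)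

/-- As `γ > 1`, the index `log (1 / ε) ^ γ` outgrows every multiple of `log (1 / ε)`. -/
lemma eventually_pow_le_sq_of_log_one_div_rpow_lt {γ σ : ℝ} (hγ : 1 < γ) (hσ₀ : 0 < σ)
    (hσ₁ : σ < 1) :
    ∀ᶠ ε : ℝ in 𝓝[>] 0, ∀ j : ℕ, Real.log (1 / ε) ^ γ < j + 1 → σ ^ j ≤ ε ^ 2 := by
  have hκ : 0 < -Real.log σ := neg_pos.2 (Real.log_neg hσ₀ hσ₁)
  have hgrowth := ((tendsto_rpow_atTop (sub_pos.2 hγ)).comp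
    tendsto_log_one_div_nhdsGT_zero).eventually_ge_atTop (2 / -Real.log σ + 1)
  filter_upwards [self_mem_nhdsWithin, hgrowth,
    tendsto_log_one_div_nhdsGT_zero.eventually_ge_atTop 1] with ε hε hgrowth hlog j hj
  set L := Real.log (1 / ε) with hL
  have hL₀ : 0 < L := one_pos.trans_le hlog
  have hindex : 2 / -Real.log σ * L ≤ j := by
    have hsplit : L ^ γ = L ^ (γ - 1) * L := by
      rw [← Real.rpow_add_one hL₀.ne', sub_add_cancel]
    have := mul_le_mul_of_nonneg_right hgrowth hL₀.le
    simp only [Function.comp_apply] at this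
    linarith
  rw [← exp_neg_two_mul_log_one_div hε, ← hL, ← Real.exp_log (pow_pos hσ₀ j), Real.exp_le_exp,
    Real.log_pow]
  rw [div_mul_eq_mul_div, div_le_iff₀ hκ] at hindex
  linarith

lemma exists_bound_of_isBigO_nhdsGT_zero {f g : ℝ → ℝ} (h : f =O[𝓝[>] 0] g)
    (hg : ∀ᶠ ε in 𝓝[>] 0, 0 ≤ g ε) :
    ∃ c > (0 : ℝ), ∃ ε₁ > (0 : ℝ), ∀ ε : ℝ, 0 < ε → ε < ε₁ → |f ε| ≤ c * g ε := by
  obtain ⟨c, hc, hbound⟩ := isBigO_iff'.1 h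
  obtain ⟨ε₁, hε₁, hsub⟩ := (nhdsGT_basis (0 : ℝ)).eventually_iff.1 (hbound.and hg)
  refine ⟨c, hc, ε₁, hε₁, fun ε hε hlt => ?_⟩
  obtain ⟨hle, hnonneg⟩ := hsub ⟨hε, hlt⟩
  rwa [Real.norm_eq_abs, Real.norm_of_nonneg hnonneg] at hle

lemma summable_add_one_sq_mul_geometric {ρ : ℝ} (hρ₀ : 0 < ρ) (hρ₁ : ρ < 1) :
    Summable fun j : ℕ => ((j : ℝ) + 1) ^ 2 * ρ ^ j := by
  have h := (summable_nat_add_iff 1).2 (summable_pow_mul_geometric_of_norm_lt_one 2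
    (r := ρ) (by rwa [Real.norm_of_nonneg hρ₀.le]))
  refine (h.mul_right ρ⁻¹).congr fun j => ?_
  field_simp
  push_cast
  ring

lemma exists_lt_one_le_pow {β : ℝ} (hβ : β < 1) (l : ℕ) :
    ∃ ρ : ℝ, 0 < ρ ∧ ρ < 1 ∧ β ≤ ρ ^ l := by
  have hlim : Tendsto (fun ρ : ℝ => ρ ^ l) (𝓝[<] 1) (𝓝 1) := by
    simpa using ((continuous_pow l).tendsto (1 : ℝ)).mono_left nhdsWithin_le_nhds
  obtain ⟨ρ, ⟨hρ₀, hρ₁⟩, hρ⟩ :=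
    ((eventually_mem_set.2 (Ioo_mem_nhdsLT one_pos)).and
      (hlim.eventually_const_le hβ)).exists
  exact ⟨ρ, hρ₀, hρ₁, hρ⟩

lemma isUnit_one_sub_of_norm_pow_lt_one {A : Type*} [NormedRing A] [HasSummableGeomSeries A]
    {x : A} {l : ℕ} (h : ‖x ^ l‖ < 1) : IsUnit (1 - x) := by
  have hcomm : Commute (1 - x) (∑ i ∈ Finset.range l, x ^ i) :=
    (mul_neg_geom_sum x l).trans (geom_sum_mul_neg x l).symm
  exact (hcomm.isUnit_mul_iff.1 (mul_neg_geom_sum x l ▸ isUnit_one_sub_of_norm_lt_one h)).1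

section Matrix

variable {T : Type*} [Fintype T]

lemma matNorm_eq_norm (A : Matrix T T ℝ) : matNorm A = ‖A‖ := by
  rw [Matrix.linfty_opNorm_def, Finset.sup_univ_eq_ciSup, NNReal.coe_iSup]
  simp [matNorm]

lemma IsStochastic.matNorm_le_one {P : Matrix T T ℝ} (hP : IsStochastic P) : matNorm P ≤ 1 := by
  refine Real.iSup_le (fun x => ?_) zero_le_one
  simp only [abs_of_nonneg (hP.1 x _), hP.2 x, le_refl]

variable [DecidableEq T]

lemma prodP_zero (B : ℕ → Matrix T T ℝ) : prodP B 0 = 1 := by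
  simp [prodP]

lemma prodP_succ (B : ℕ → Matrix T T ℝ) (j : ℕ) :
    prodP B (j + 1) = prodP B j * B (j + 1) :=
  List.prod_range_succ _ _

lemma prodP_add (B : ℕ → Matrix T T ℝ) (m n : ℕ) :
    prodP B (m + n) = prodP B m * prodP (fun j => B (m + j)) n := by
  induction n with
  | zero => rw [prodP_zero, mul_one, add_zero]
  | succ n ih => rw [← add_assoc, prodP_succ, ih, prodP_succ, mul_assoc, add_assoc]

lemma tendsto_prodP {ι : Type*} {F : Filter ι} {B : ℕ → ι → Matrix T T ℝ} {A : Matrix T T ℝ}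
    (hB : ∀ k, Tendsto (B (k + 1)) F (𝓝 A)) (l : ℕ) :
    Tendsto (fun i => prodP (fun k => B k i) l) F (𝓝 (A ^ l)) := by
  induction l with
  | zero => simpa only [prodP_zero, pow_zero] using tendsto_const_nhds
  | succ l ih => simpa only [prodP_succ, pow_succ] using ih.mul (hB l)

lemma norm_prodP_le_pow {B : ℕ → Matrix T T ℝ} {M : ℝ} (hB : ∀ k, ‖B (k + 1)‖ ≤ M) (j : ℕ) :
    ‖prodP B j‖ ≤ M ^ j := by
  induction j with
  | zero =>
    rw [prodP_zero, pow_zero]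
    cases isEmpty_or_nonempty T
    · simp [Subsingleton.elim (1 : Matrix T T ℝ) 0]
    · exact norm_one.le
  | succ j ih =>
    rw [prodP_succ, pow_succ]
    exact norm_mul_le_of_le ih (hB j)

lemma norm_prodP_le_geometric {B : ℕ → Matrix T T ℝ} {M ρ : ℝ} {l : ℕ} (hl : 1 ≤ l) (hρ : 0 < ρ)
    (hρM : ρ ≤ M) (hB : ∀ k, ‖B (k + 1)‖ ≤ M)
    (hblock : ∀ k, ‖prodP (fun j => B (k + j)) l‖ ≤ ρ ^ l) (j : ℕ) :
    ‖prodP B j‖ ≤ (M / ρ) ^ l * ρ ^ j := by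
  induction j using Nat.strong_induction_on with
  | h j ih =>
    rcases lt_or_ge j l with hj | hj
    · calc ‖prodP B j‖ ≤ M ^ j := norm_prodP_le_pow hB j
        _ = (M / ρ) ^ j * ρ ^ j := by rw [← mul_pow, div_mul_cancel₀ _ hρ.ne']
        _ ≤ (M / ρ) ^ l * ρ ^ j := by
          gcongr
          exact (one_le_div hρ).2 hρM
    · obtain ⟨m, rfl⟩ := Nat.exists_eq_add_of_le' hj
      rw [prodP_add, pow_add, ← mul_assoc]
      exact norm_mul_le_of_le (ih m (by omega)) (hblock m)

lemma exists_eventually_norm_prodP_le_geometric {ι : Type*} {F : Filter ι}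
    {B : ℕ → ι → Matrix T T ℝ} {M β : ℝ} {l : ℕ} (hl : 1 ≤ l) (hβ : β < 1)
    (hB : ∀ᶠ i in F, ∀ k, ‖B (k + 1) i‖ ≤ M)
    (hblock : ∀ᶠ i in F, ∀ k, ‖prodP (fun j => B (k + j) i) l‖ ≤ β) :
    ∃ K ρ : ℝ, 0 < ρ ∧ ρ < 1 ∧ ∀ᶠ i in F, ∀ j, ‖prodP (fun k => B k i) j‖ ≤ K * ρ ^ j := by
  obtain ⟨ρ, hρ₀, hρ₁, hβρ⟩ := exists_lt_one_le_pow hβ l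
  refine ⟨(max M ρ / ρ) ^ l, ρ, hρ₀, hρ₁, ?_⟩
  filter_upwards [hB, hblock] with i hBi hblocki
  exact norm_prodP_le_geometric hl hρ₀ (le_max_right _ _)
    (fun k => (hBi k).trans (le_max_left _ _)) fun k => (hblocki k).trans hβρ

lemma one_sub_inv_mulVec_sub {A : Matrix T T ℝ} (hA : IsUnit (1 - A)) (f : T → ℝ) :
    (1 - A)⁻¹ *ᵥ f - A *ᵥ ((1 - A)⁻¹ *ᵥ f) = f := by
  have hinv := Matrix.mul_nonsing_inv (1 - A) ((Matrix.isUnit_iff_isUnit_det _).1 hA)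
  calc (1 - A)⁻¹ *ᵥ f - A *ᵥ ((1 - A)⁻¹ *ᵥ f) = ((1 - A) * (1 - A)⁻¹) *ᵥ f := by
        rw [← Matrix.mulVec_mulVec, Matrix.sub_mulVec, Matrix.one_mulVec]
    _ = f := by rw [hinv, Matrix.one_mulVec]

lemma commute_one_sub_inv {A : Matrix T T ℝ} (hA : IsUnit (1 - A)) : Commute A (1 - A)⁻¹ := by
  obtain ⟨u, hu⟩ := hA
  have hcomm : Commute A u := hu ▸ (Commute.one_right A).sub_right (Commute.refl A)
  rw [← hu, ← Matrix.coe_units_inv]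
  exact hcomm.units_inv_right

lemma one_sub_inv_mulVec_mulVec {A : Matrix T T ℝ} (hA : IsUnit (1 - A)) (A₁ : Matrix T T ℝ)
    (f g : T → ℝ) :
    (1 - A)⁻¹ *ᵥ (A *ᵥ ((1 - A)⁻¹ *ᵥ (f + A₁ *ᵥ ((1 - A)⁻¹ *ᵥ g)))) =
      (A * (1 - A)⁻¹ ^ 2 * A₁ * (1 - A)⁻¹) *ᵥ g + (A * (1 - A)⁻¹ ^ 2) *ᵥ f := by
  have hswap : (1 - A)⁻¹ * (A * (1 - A)⁻¹) = A * (1 - A)⁻¹ ^ 2 := by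
    rw [← mul_assoc, ← (commute_one_sub_inv hA).eq, mul_assoc, sq]
  rw [Matrix.mulVec_mulVec, Matrix.mulVec_mulVec, mul_assoc, hswap, Matrix.mulVec_add,
    Matrix.mulVec_mulVec, Matrix.mulVec_mulVec, add_comm]

/-- The expected rewards `∑ j, B₁ ⋯ B_j R_{j+1}` cumulated by a chain with substochastic
transition matrices `B₁, B₂, …`, as a vector indexed by the initial state. -/
noncomputable def cumulatedReward (B : ℕ → Matrix T T ℝ) (R : ℕ → T → ℝ) : T → ℝ :=
  ∑' j, prodP B j *ᵥ R (j + 1)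

/-- The amount by which `v` fails the backward recursion `v j = R_{j+1} + B_{j+1} (v (j + 1))`,
whose solution is the reward still to be cumulated at time `j`. -/
def backwardDefect (B : ℕ → Matrix T T ℝ) (R v : ℕ → T → ℝ) (j : ℕ) : T → ℝ :=
  v j - R (j + 1) - B (j + 1) *ᵥ v (j + 1)

lemma hasSum_prodP_mulVec_backwardDefect {B : ℕ → Matrix T T ℝ} {R v : ℕ → T → ℝ}
    (hR : Summable fun j => prodP B j *ᵥ R (j + 1)) (hv : Summable fun j => prodP B j *ᵥ v j) :
    HasSum (fun j => prodP B j *ᵥ backwardDefect B R v j) (v 0 - cumulatedReward B R) := by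
  have htelescope : HasSum
      (fun j => prodP B j *ᵥ v j - prodP B j *ᵥ R (j + 1) - prodP B (j + 1) *ᵥ v (j + 1)) _ :=
    (hv.hasSum.sub hR.hasSum).sub ((hasSum_nat_add_iff' 1).2 hv.hasSum)
  have hvalue : v 0 - cumulatedReward B R =
      ∑' j, prodP B j *ᵥ v j - ∑' j, prodP B j *ᵥ R (j + 1) -
        (∑' j, prodP B j *ᵥ v j - ∑ j ∈ Finset.range 1, prodP B j *ᵥ v j) := by
    rw [Finset.sum_range_one, prodP_zero, Matrix.one_mulVec, cumulatedReward]
    abel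
  simpa only [hvalue, backwardDefect, Matrix.mulVec_sub, Matrix.mulVec_mulVec, ← prodP_succ]
    using htelescope

lemma summable_prodP_mulVec {B : ℕ → Matrix T T ℝ} {K ρ A : ℝ} {u : ℕ → T → ℝ} (hρ₀ : 0 < ρ)
    (hρ₁ : ρ < 1) (hdecay : ∀ j, ‖prodP B j‖ ≤ K * ρ ^ j)
    (hu : ∀ j : ℕ, ‖u j‖ ≤ A * (j + 1) ^ 2) :
    Summable fun j => prodP B j *ᵥ u j := by
  refine .of_norm_bounded ((summable_add_one_sq_mul_geometric hρ₀ hρ₁).mul_left (K * A))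
    fun j => ?_
  calc ‖prodP B j *ᵥ u j‖ ≤ ‖prodP B j‖ * ‖u j‖ := Matrix.linfty_opNorm_mulVec _ _
    _ ≤ K * ρ ^ j * (A * (j + 1) ^ 2) :=
      mul_le_mul (hdecay j) (hu j) (norm_nonneg _) ((norm_nonneg _).trans (hdecay j))
    _ = K * A * ((j + 1) ^ 2 * ρ ^ j) := by ring

lemma summable_prodP_mulVec_of_bounded {B : ℕ → Matrix T T ℝ} {K ρ M : ℝ} {u : ℕ → T → ℝ}
    (hρ₀ : 0 < ρ) (hρ₁ : ρ < 1) (hdecay : ∀ j, ‖prodP B j‖ ≤ K * ρ ^ j) (hu : ∀ j, ‖u j‖ ≤ M) :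
    Summable fun j => prodP B j *ᵥ u j :=
  summable_prodP_mulVec hρ₀ hρ₁ hdecay fun j =>
    (hu j).trans (le_mul_of_one_le_right ((norm_nonneg _).trans (hu j)) (one_le_pow₀ (by simp)))

/-- Only half of the decay of `B₁ ⋯ B_j` is spent on summability: the other half is left to
absorb defects that are small only for small `j`. -/
lemma norm_cumulatedReward_sub_le {B : ℕ → Matrix T T ℝ} {R v : ℕ → T → ℝ} {K σ M A η : ℝ}
    (hσ₀ : 0 < σ) (hσ₁ : σ < 1) (hdecay : ∀ j, ‖prodP B j‖ ≤ K * (σ ^ 2) ^ j)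
    (hR : ∀ j, ‖R (j + 1)‖ ≤ M) (hv : ∀ j : ℕ, ‖v j‖ ≤ A * (j + 1) ^ 2)
    (hdefect : ∀ j : ℕ, σ ^ j * ‖backwardDefect B R v j‖ ≤ η * (j + 1) ^ 2) :
    ‖cumulatedReward B R - v 0‖ ≤ K * (∑' j : ℕ, ((j : ℝ) + 1) ^ 2 * σ ^ j) * η := by
  have hsq₁ : σ ^ 2 < 1 := pow_lt_one₀ hσ₀.le hσ₁ two_ne_zero
  have hsum := hasSum_prodP_mulVec_backwardDefect
    (summable_prodP_mulVec_of_bounded (pow_pos hσ₀ 2) hsq₁ hdecay hR)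
    (summable_prodP_mulVec (pow_pos hσ₀ 2) hsq₁ hdecay hv)
  have hK : 0 ≤ K := by simpa using (norm_nonneg _).trans (hdecay 0)
  rw [norm_sub_rev, ← hsum.tsum_eq, mul_right_comm]
  refine tsum_of_norm_bounded
    ((summable_add_one_sq_mul_geometric hσ₀ hσ₁).hasSum.mul_left (K * η)) fun j => ?_
  calc ‖prodP B j *ᵥ backwardDefect B R v j‖
      ≤ ‖prodP B j‖ * ‖backwardDefect B R v j‖ := Matrix.linfty_opNorm_mulVec _ _
    _ ≤ K * (σ ^ 2) ^ j * ‖backwardDefect B R v j‖ := by gcongr; exact hdecay j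
    _ = K * σ ^ j * (σ ^ j * ‖backwardDefect B R v j‖) := by ring
    _ ≤ K * σ ^ j * (η * (j + 1) ^ 2) :=
      mul_le_mul_of_nonneg_left (hdefect j) (by positivity)
    _ = K * η * ((j + 1) ^ 2 * σ ^ j) := by ring

end Matrix

section LinearDrift

variable {E F : Type*} [NormedAddCommGroup E] [NormedSpace ℝ E] [NormedAddCommGroup F]
  [NormedSpace ℝ F] {γ s : ℝ}

/-- The expansion `u_k(ε) = u₀ + ε (k - 1) u₁ + O(ε² log(1/ε)^s)` as `ε ↓ 0`, uniformly in
`1 ≤ k ≤ log(1/ε)^γ`. The index is written `k + 1` to avoid subtraction. -/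
def HasLinearDrift (γ s : ℝ) (u : ℕ → ℝ → E) (u₀ u₁ : E) : Prop :=
  ∃ c : ℝ, ∀ᶠ ε : ℝ in 𝓝[>] 0, ∀ k : ℕ, (k : ℝ) + 1 ≤ Real.log (1 / ε) ^ γ →
    ‖u (k + 1) ε - (u₀ + (ε * k) • u₁)‖ ≤ c * (ε ^ 2 * Real.log (1 / ε) ^ s)

lemma HasLinearDrift.map {u : ℕ → ℝ → E} {u₀ u₁ : E} (hu : HasLinearDrift γ s u u₀ u₁)
    (f : E →L[ℝ] F) : HasLinearDrift γ s (fun k ε => f (u k ε)) (f u₀) (f u₁) := by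
  obtain ⟨c, hc⟩ := hu
  refine ⟨‖f‖ * c, hc.mono fun ε hε k hk => ?_⟩
  rw [← map_smul, ← map_add, ← map_sub, mul_assoc]
  exact f.le_opNorm_of_le (hε k hk)

lemma HasLinearDrift.const_add {u : ℕ → ℝ → E} {u₀ u₁ : E} (hu : HasLinearDrift γ s u u₀ u₁)
    (a : E) : HasLinearDrift γ s (fun k ε => a + u k ε) (a + u₀) u₁ := by
  simpa only [HasLinearDrift, add_assoc, add_sub_add_left_eq_sub] using hu

lemma HasLinearDrift.tendsto {u : ℕ → ℝ → E} {u₀ u₁ : E} (hu : HasLinearDrift γ s u u₀ u₁)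
    (hγ : 0 < γ) (k : ℕ) : Tendsto (u (k + 1)) (𝓝[>] 0) (𝓝 u₀) := by
  obtain ⟨c, hc⟩ := hu
  have herror : Tendsto (fun ε => u (k + 1) ε - (u₀ + (ε * k) • u₁)) (𝓝[>] 0) (𝓝 0) := by
    refine squeeze_zero_norm' ?_ (by
      simpa only [mul_zero] using (tendsto_sq_mul_log_one_div_rpow s).const_mul c)
    filter_upwards [hc, ((tendsto_rpow_atTop hγ).comp
      tendsto_log_one_div_nhdsGT_zero).eventually_ge_atTop ((k : ℝ) + 1)] with ε hε hk
    exact hε k hk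
  have hmain : Tendsto (fun ε : ℝ => u₀ + (ε * k) • u₁) (𝓝[>] 0) (𝓝 u₀) := by
    have hcont : Continuous fun ε : ℝ => u₀ + (ε * k) • u₁ := by fun_prop
    simpa using (hcont.tendsto 0).mono_left nhdsWithin_le_nhds
  simpa using herror.add hmain

end LinearDrift

section Expansion

/-- The first-order approximation, affine in the current time `j`, of the reward still to be
cumulated at that time. -/
def approxValue {E : Type*} [AddCommGroup E] [Module ℝ E] (a p q : E) (ε : ℝ) (j : ℕ) : E :=
  a + ε • ((j : ℝ) • p + q)

lemma norm_natCast_smul_add_le {E : Type*} [SeminormedAddCommGroup E] [NormedSpace ℝ E]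
    (p q : E) (j : ℕ) : ‖(j : ℝ) • p + q‖ ≤ (‖p‖ + ‖q‖) * (j + 1) := by
  have h := norm_add_le ((j : ℝ) • p) q
  rw [norm_smul, Real.norm_natCast] at h
  have := mul_nonneg j.cast_nonneg (norm_nonneg q)
  linarith [norm_nonneg p]

lemma norm_approxValue_le {E : Type*} [SeminormedAddCommGroup E] [NormedSpace ℝ E] (a p q : E)
    {ε : ℝ} (hε₀ : 0 ≤ ε) (hε₁ : ε ≤ 1) (j : ℕ) :
    ‖approxValue a p q ε j‖ ≤ (‖a‖ + ‖p‖ + ‖q‖) * (j + 1) := by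
  calc ‖approxValue a p q ε j‖ ≤ ‖a‖ + ε * ‖(j : ℝ) • p + q‖ := by
        simpa only [approxValue, norm_smul, Real.norm_of_nonneg hε₀] using
          norm_add_le a (ε • ((j : ℝ) • p + q))
    _ ≤ ‖a‖ * (j + 1) + 1 * ((‖p‖ + ‖q‖) * (j + 1)) := by
        gcongr
        · exact le_mul_of_one_le_right (norm_nonneg a) (by simp)
        · exact norm_natCast_smul_add_le p q j
    _ = (‖a‖ + ‖p‖ + ‖q‖) * (j + 1) := by ring

variable {T : Type*} [Fintype T] {B₀ B₁ : Matrix T T ℝ} {r₀ r₁ a p q : T → ℝ}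

/-- The equations for `a`, `p`, `q` cancel the terms of order `1`, `ε j` and `ε`. -/
lemma backwardDefect_approxValue (ha : a - B₀ *ᵥ a = r₀) (hp : p - B₀ *ᵥ p = r₁ + B₁ *ᵥ a)
    (hq : q - B₀ *ᵥ q = B₀ *ᵥ p) (B : ℕ → Matrix T T ℝ) (R : ℕ → T → ℝ) (ε : ℝ) (j : ℕ) :
    backwardDefect B R (approxValue a p q ε) j =
      -(R (j + 1) - (r₀ + (ε * j) • r₁)) -
        (B (j + 1) - (B₀ + (ε * j) • B₁)) *ᵥ approxValue a p q ε (j + 1) -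
        (ε ^ 2 * j) • (B₁ *ᵥ (((j + 1 : ℕ) : ℝ) • p + q)) := by
  have hr₁ : r₁ = p - B₀ *ᵥ p - B₁ *ᵥ a := eq_sub_of_add_eq hp.symm
  have hq' : q = B₀ *ᵥ p + B₀ *ᵥ q := eq_add_of_sub_eq hq
  simp only [backwardDefect, approxValue, Matrix.sub_mulVec, Matrix.add_mulVec,
    Matrix.smul_mulVec, Matrix.mulVec_add, Matrix.mulVec_smul, ← ha, hr₁]
  push_cast
  linear_combination (norm := module) ε • hq'

lemma norm_backwardDefect_approxValue_le (ha : a - B₀ *ᵥ a = r₀)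
    (hp : p - B₀ *ᵥ p = r₁ + B₁ *ᵥ a) (hq : q - B₀ *ᵥ q = B₀ *ᵥ p) {B : ℕ → Matrix T T ℝ}
    {R : ℕ → T → ℝ} {ε dB dR : ℝ} {j : ℕ} (hε₀ : 0 ≤ ε) (hε₁ : ε ≤ 1)
    (hB : ‖B (j + 1) - (B₀ + (ε * j) • B₁)‖ ≤ dB)
    (hR : ‖R (j + 1) - (r₀ + (ε * j) • r₁)‖ ≤ dR) :
    ‖backwardDefect B R (approxValue a p q ε) j‖ ≤
      dR + dB * ((‖a‖ + ‖p‖ + ‖q‖) * (j + 2)) +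
        ε ^ 2 * j * (‖B₁‖ * ((‖p‖ + ‖q‖) * (j + 2))) := by
  have hcast : ((j + 1 : ℕ) : ℝ) + 1 = j + 2 := by push_cast; ring
  have hvalue := norm_approxValue_le a p q hε₀ hε₁ (j + 1)
  have hslope := norm_natCast_smul_add_le p q (j + 1)
  rw [hcast] at hvalue hslope
  rw [backwardDefect_approxValue ha hp hq]
  refine norm_sub_le_of_le (norm_sub_le_of_le (by rwa [norm_neg]) ?_) ?_
  · exact (Matrix.linfty_opNorm_mulVec _ _).trans
      (mul_le_mul hB hvalue (norm_nonneg _) ((norm_nonneg _).trans hB))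
  · rw [norm_smul, Real.norm_of_nonneg (by positivity)]
    gcongr
    exact (Matrix.linfty_opNorm_mulVec _ _).trans (by gcongr)

variable {γ s : ℝ} {B : ℕ → ℝ → Matrix T T ℝ} {R : ℕ → ℝ → T → ℝ}

lemma exists_norm_backwardDefect_le_of_le_log (hs : 0 ≤ s) (hB : HasLinearDrift γ s B B₀ B₁)
    (hR : HasLinearDrift γ s R r₀ r₁) (ha : a - B₀ *ᵥ a = r₀)
    (hp : p - B₀ *ᵥ p = r₁ + B₁ *ᵥ a) (hq : q - B₀ *ᵥ q = B₀ *ᵥ p) :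
    ∃ c : ℝ, ∀ᶠ ε in 𝓝[>] 0, ∀ j : ℕ, (j : ℝ) + 1 ≤ Real.log (1 / ε) ^ γ →
      ‖backwardDefect (fun k => B k ε) (fun k => R k ε) (approxValue a p q ε) j‖ ≤
        c * (ε ^ 2 * Real.log (1 / ε) ^ s) * (j + 1) ^ 2 := by
  obtain ⟨cB, hcB⟩ := hB
  obtain ⟨cR, hcR⟩ := hR
  refine ⟨cR + cB * ((‖a‖ + ‖p‖ + ‖q‖) * 2) + ‖B₁‖ * ((‖p‖ + ‖q‖) * 2), ?_⟩
  filter_upwards [hcB, hcR, eventually_sq_le_sq_mul_log_one_div_rpow hs, self_mem_nhdsWithin,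
    nhdsWithin_le_nhds (Iic_mem_nhds one_pos)] with ε hBε hRε hsq hε₀ hε₁ j hj
  have hdB := (norm_nonneg _).trans (hBε j hj)
  have hdR := (norm_nonneg _).trans (hRε j hj)
  refine (norm_backwardDefect_approxValue_le (B := fun k => B k ε) (R := fun k => R k ε) ha hp hq
    (Set.mem_Ioi.1 hε₀).le hε₁ (hBε j hj) (hRε j hj)).trans ?_
  set η := ε ^ 2 * Real.log (1 / ε) ^ s
  have hη : 0 ≤ η := (sq_nonneg ε).trans hsq
  have hj₀ : (0 : ℝ) ≤ j := j.cast_nonneg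
  have hone : (1 : ℝ) ≤ (j + 1) ^ 2 := by nlinarith [hj₀]
  have hlinear : (j : ℝ) + 2 ≤ 2 * (j + 1) ^ 2 := by nlinarith [hj₀]
  have hquadratic : (j : ℝ) * (j + 2) ≤ 2 * (j + 1) ^ 2 := by nlinarith [hj₀]
  calc cR * η + cB * η * ((‖a‖ + ‖p‖ + ‖q‖) * (j + 2)) +
        ε ^ 2 * j * (‖B₁‖ * ((‖p‖ + ‖q‖) * (j + 2)))
      = cR * η * 1 + cB * η * ((‖a‖ + ‖p‖ + ‖q‖) * (j + 2)) +
        ε ^ 2 * (‖B₁‖ * ((‖p‖ + ‖q‖) * (j * (j + 2)))) := by ring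
    _ ≤ cR * η * (j + 1) ^ 2 + cB * η * ((‖a‖ + ‖p‖ + ‖q‖) * (2 * (j + 1) ^ 2)) +
        η * (‖B₁‖ * ((‖p‖ + ‖q‖) * (2 * (j + 1) ^ 2))) := by gcongr
    _ = _ := by ring

lemma norm_backwardDefect_le {B : ℕ → Matrix T T ℝ} {R v : ℕ → T → ℝ} {M M' A : ℝ}
    (hB : ∀ k, ‖B (k + 1)‖ ≤ M) (hR : ∀ k, ‖R (k + 1)‖ ≤ M')
    (hv : ∀ j : ℕ, ‖v j‖ ≤ A * (j + 1)) (j : ℕ) :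
    ‖backwardDefect B R v j‖ ≤ (A + M' + M * (A * 2)) * (j + 1) ^ 2 := by
  have hM : 0 ≤ M := (norm_nonneg _).trans (hB 0)
  have hM' : 0 ≤ M' := (norm_nonneg _).trans (hR 0)
  have hA : 0 ≤ A := by simpa using (norm_nonneg _).trans (hv 0)
  have hstep : (j : ℝ) + 1 ≤ (j + 1) ^ 2 := le_self_pow₀ (by simp) two_ne_zero
  have hnext : ‖v (j + 1)‖ ≤ A * (2 * (j + 1)) :=
    (hv (j + 1)).trans (by push_cast; gcongr; linarith [j.cast_nonneg (α := ℝ)])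
  calc ‖backwardDefect B R v j‖ ≤ A * (j + 1) + M' * 1 + M * (A * (2 * (j + 1))) := by
        refine norm_sub_le_of_le (norm_sub_le_of_le (hv j) (by simpa using hR j)) ?_
        exact (Matrix.linfty_opNorm_mulVec _ _).trans
          (mul_le_mul (hB j) hnext (norm_nonneg _) hM)
    _ ≤ A * (j + 1) ^ 2 + M' * (j + 1) ^ 2 + M * (A * (2 * (j + 1) ^ 2)) := by
        gcongr
        exact one_le_pow₀ (by simp)
    _ = (A + M' + M * (A * 2)) * (j + 1) ^ 2 := by ring

lemma exists_pow_mul_norm_backwardDefect_le {σ M M' : ℝ} (hγ : 1 < γ) (hs : 0 ≤ s)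
    (hσ₀ : 0 < σ) (hσ₁ : σ < 1) (hB : HasLinearDrift γ s B B₀ B₁)
    (hR : HasLinearDrift γ s R r₀ r₁) (hBM : ∀ᶠ ε in 𝓝[>] 0, ∀ k, ‖B (k + 1) ε‖ ≤ M)
    (hRM : ∀ᶠ ε in 𝓝[>] 0, ∀ k, ‖R (k + 1) ε‖ ≤ M') (ha : a - B₀ *ᵥ a = r₀)
    (hp : p - B₀ *ᵥ p = r₁ + B₁ *ᵥ a) (hq : q - B₀ *ᵥ q = B₀ *ᵥ p) :
    ∃ c : ℝ, ∀ᶠ ε in 𝓝[>] 0, ∀ j : ℕ,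
      σ ^ j * ‖backwardDefect (fun k => B k ε) (fun k => R k ε) (approxValue a p q ε) j‖ ≤
        c * (ε ^ 2 * Real.log (1 / ε) ^ s) * (j + 1) ^ 2 := by
  obtain ⟨c₁, hnear⟩ := exists_norm_backwardDefect_le_of_le_log hs hB hR ha hp hq
  set A := ‖a‖ + ‖p‖ + ‖q‖
  set c₂ := A + M' + M * (A * 2)
  refine ⟨max c₁ c₂, ?_⟩
  filter_upwards [hnear, hBM, hRM, eventually_sq_le_sq_mul_log_one_div_rpow hs,
    eventually_pow_le_sq_of_log_one_div_rpow_lt hγ hσ₀ hσ₁, self_mem_nhdsWithin,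
    nhdsWithin_le_nhds (Iic_mem_nhds one_pos)] with ε hnear hBε hRε hsq htail hε₀ hε₁ j
  have hfar := norm_backwardDefect_le (B := fun k => B k ε) (R := fun k => R k ε) hBε hRε
    (norm_approxValue_le a p q (Set.mem_Ioi.1 hε₀).le hε₁) j
  set d := ‖backwardDefect (fun k => B k ε) (fun k => R k ε) (approxValue a p q ε) j‖
  set η := ε ^ 2 * Real.log (1 / ε) ^ s
  have hd : 0 ≤ d := norm_nonneg _
  have hη : 0 ≤ η := (sq_nonneg ε).trans hsq
  rcases le_or_gt ((j : ℝ) + 1) (Real.log (1 / ε) ^ γ) with hj | hj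
  · calc σ ^ j * d ≤ d := mul_le_of_le_one_left hd (pow_le_one₀ hσ₀.le hσ₁.le)
      _ ≤ c₁ * η * (j + 1) ^ 2 := hnear j hj
      _ ≤ max c₁ c₂ * η * (j + 1) ^ 2 := by gcongr; exact le_max_left _ _
  · calc σ ^ j * d ≤ η * (c₂ * (j + 1) ^ 2) :=
          mul_le_mul ((htail j hj).trans hsq) hfar hd hη
      _ = c₂ * η * (j + 1) ^ 2 := by ring
      _ ≤ max c₁ c₂ * η * (j + 1) ^ 2 := by gcongr; exact le_max_right _ _

variable [DecidableEq T]

lemma HasLinearDrift.isUnit_one_sub {β : ℝ} {l : ℕ} (hB : HasLinearDrift γ s B B₀ B₁)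
    (hγ : 0 < γ) (hβ : β < 1)
    (hblock : ∀ᶠ ε in 𝓝[>] 0, ‖prodP (fun k => B k ε) l‖ ≤ β) : IsUnit (1 - B₀) :=
  isUnit_one_sub_of_norm_pow_lt_one
    ((le_of_tendsto (tendsto_prodP (hB.tendsto hγ) l).norm hblock).trans_lt hβ)

theorem isBigO_cumulatedReward_sub {K ρ M M' : ℝ} (hγ : 1 < γ) (hs : 0 ≤ s)
    (hρ₀ : 0 < ρ) (hρ₁ : ρ < 1) (hB : HasLinearDrift γ s B B₀ B₁)
    (hR : HasLinearDrift γ s R r₀ r₁) (hBM : ∀ᶠ ε in 𝓝[>] 0, ∀ k, ‖B (k + 1) ε‖ ≤ M)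
    (hRM : ∀ᶠ ε in 𝓝[>] 0, ∀ k, ‖R (k + 1) ε‖ ≤ M')
    (hdecay : ∀ᶠ ε in 𝓝[>] 0, ∀ j, ‖prodP (fun k => B k ε) j‖ ≤ K * ρ ^ j)
    (ha : a - B₀ *ᵥ a = r₀) (hp : p - B₀ *ᵥ p = r₁ + B₁ *ᵥ a) (hq : q - B₀ *ᵥ q = B₀ *ᵥ p) :
    (fun ε => cumulatedReward (fun k => B k ε) (fun k => R k ε) - (a + ε • q))
      =O[𝓝[>] 0] fun ε => ε ^ 2 * Real.log (1 / ε) ^ s := by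
  have hσ₀ : 0 < √ρ := Real.sqrt_pos.2 hρ₀
  have hσ₁ : √ρ < 1 := by rwa [Real.sqrt_lt' one_pos, one_pow]
  obtain ⟨c, hc⟩ :=
    exists_pow_mul_norm_backwardDefect_le hγ hs hσ₀ hσ₁ hB hR hBM hRM ha hp hq
  refine .of_bound (K * (∑' j : ℕ, ((j : ℝ) + 1) ^ 2 * √ρ ^ j) * c) ?_
  filter_upwards [hc, hRM, hdecay, eventually_sq_le_sq_mul_log_one_div_rpow hs,
    self_mem_nhdsWithin, nhdsWithin_le_nhds (Iic_mem_nhds one_pos)]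
    with ε hdefect hRε hdecay hsq hε₀ hε₁
  have hgrowth (j : ℕ) : ‖approxValue a p q ε j‖ ≤ (‖a‖ + ‖p‖ + ‖q‖) * (j + 1) ^ 2 :=
    (norm_approxValue_le a p q (Set.mem_Ioi.1 hε₀).le hε₁ j).trans
      (by gcongr; exact le_self_pow₀ (by simp) two_ne_zero)
  have hbound := norm_cumulatedReward_sub_le (R := fun k => R k ε) hσ₀ hσ₁
    (by simpa only [Real.sq_sqrt hρ₀.le] using hdecay) hRε hgrowth hdefect
  have hinitial : approxValue a p q ε 0 = a + ε • q := by simp [approxValue]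
  rwa [hinitial, ← mul_assoc, ← Real.norm_of_nonneg ((sq_nonneg ε).trans hsq)] at hbound

theorem isBigO_cumulatedReward_sub_inv {K ρ M M' : ℝ} (hγ : 1 < γ) (hs : 0 ≤ s)
    (hρ₀ : 0 < ρ) (hρ₁ : ρ < 1) (hB : HasLinearDrift γ s B B₀ B₁)
    (hR : HasLinearDrift γ s R r₀ r₁) (hBM : ∀ᶠ ε in 𝓝[>] 0, ∀ k, ‖B (k + 1) ε‖ ≤ M)
    (hRM : ∀ᶠ ε in 𝓝[>] 0, ∀ k, ‖R (k + 1) ε‖ ≤ M')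
    (hdecay : ∀ᶠ ε in 𝓝[>] 0, ∀ j, ‖prodP (fun k => B k ε) j‖ ≤ K * ρ ^ j)
    (hunit : IsUnit (1 - B₀)) :
    (fun ε => cumulatedReward (fun k => B k ε) (fun k => R k ε) -
        ((1 - B₀)⁻¹ *ᵥ r₀ + ε • ((B₀ * (1 - B₀)⁻¹ ^ 2 * B₁ * (1 - B₀)⁻¹) *ᵥ r₀ +
          (B₀ * (1 - B₀)⁻¹ ^ 2) *ᵥ r₁)))
      =O[𝓝[>] 0] fun ε => ε ^ 2 * Real.log (1 / ε) ^ s := by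
  rw [← one_sub_inv_mulVec_mulVec hunit]
  exact isBigO_cumulatedReward_sub hγ hs hρ₀ hρ₁ hB hR hBM hRM hdecay
    (one_sub_inv_mulVec_sub hunit _) (one_sub_inv_mulVec_sub hunit _)
    (one_sub_inv_mulVec_sub hunit _)

end Expansion

lemma hasLinearDrift_of_matNorm_le {T : Type*} [Fintype T] {γ s : ℝ} {P : ℕ → ℝ → Matrix T T ℝ}
    {P₀ P₁ : Matrix T T ℝ}
    (hP : ∃ c > (0 : ℝ), ∃ ε₀ > (0 : ℝ), ∀ ε : ℝ, 0 < ε → ε < ε₀ →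
      ∀ i : ℕ, 1 ≤ i → (i : ℝ) ≤ Real.log (1 / ε) ^ γ →
        matNorm (P i ε - (P₀ + (ε * ((i : ℝ) - 1)) • P₁)) ≤ c * ε ^ 2 * Real.log (1 / ε) ^ s) :
    HasLinearDrift γ s P P₀ P₁ := by
  obtain ⟨c, -, ε₀, hε₀, hbound⟩ := hP
  refine ⟨c, ?_⟩
  filter_upwards [Ioo_mem_nhdsGT hε₀] with ε hε k hk
  have h := hbound ε hε.1 hε.2 (k + 1) k.succ_pos (by rwa [Nat.cast_add_one])
  rwa [matNorm_eq_norm, Nat.cast_add_one, add_sub_cancel_right, mul_assoc c] at h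

section HittingTime

variable {S : Type*} [Fintype S] (C : Set S) [DecidablePred (· ∈ C)]

/-- `subB C` as a continuous linear map. -/
noncomputable def subBCLM : Matrix S S ℝ →L[ℝ] Matrix C C ℝ :=
  LinearMap.toContinuousLinearMap
    { toFun := subB C
      map_add' := fun _ _ => rfl
      map_smul' := fun _ _ => rfl }

/-- The part of `rC C r P` that is linear in `P`: the expected reward collected on exiting `C`. -/
noncomputable def exitReward (r : S → ℝ) : Matrix S S ℝ →L[ℝ] (C → ℝ) :=
  LinearMap.toContinuousLinearMap
    { toFun := fun P x => ∑ y ∈ Finset.univ.filter (fun y => y ∉ C), P x.1 y * r y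
      map_add' := fun P Q => by
        ext x
        simp only [Matrix.add_apply, add_mul, Finset.sum_add_distrib, Pi.add_apply]
      map_smul' := fun t P => by
        ext x
        simp only [Matrix.smul_apply, smul_eq_mul, mul_assoc, Finset.mul_sum, Pi.smul_apply,
          RingHom.id_apply] }

lemma HasLinearDrift.subB {γ s : ℝ} {P : ℕ → ℝ → Matrix S S ℝ} {P₀ P₁ : Matrix S S ℝ}
    (hP : HasLinearDrift γ s P P₀ P₁) :
    HasLinearDrift γ s (fun k ε => subB C (P k ε)) (subB C P₀) (subB C P₁) :=
  hP.map (subBCLM C)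

lemma HasLinearDrift.rC {γ s : ℝ} {P : ℕ → ℝ → Matrix S S ℝ} {P₀ P₁ : Matrix S S ℝ}
    (hP : HasLinearDrift γ s P P₀ P₁) (r : S → ℝ) :
    HasLinearDrift γ s (fun k ε => rC C r (P k ε)) (rC C r P₀) (exitReward C r P₁) :=
  (hP.map (exitReward C r)).const_add fun x => r x.1

lemma exists_norm_subB_le (M : ℝ) : ∃ M', ∀ P : Matrix S S ℝ, ‖P‖ ≤ M → ‖subB C P‖ ≤ M' :=
  ⟨_, fun _ hP => (subBCLM C).le_opNorm_of_le hP⟩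

lemma exists_norm_rC_le (M : ℝ) (r : S → ℝ) :
    ∃ M', ∀ P : Matrix S S ℝ, ‖P‖ ≤ M → ‖rC C r P‖ ≤ M' :=
  ⟨_, fun _ hP => norm_add_le_of_le le_rfl ((exitReward C r).le_opNorm_of_le hP)⟩

variable [DecidableEq S]

lemma deltaReward_eq_dotProduct (μ : C → ℝ) (r : S → ℝ) (P : ℕ → Matrix S S ℝ)
    (hsum : Summable fun j => prodP (fun k => subB C (P k)) j *ᵥ rC C r (P (j + 1))) :
    deltaReward C μ r P =
      μ ⬝ᵥ cumulatedReward (fun k => subB C (P k)) (fun k => rC C r (P k)) :=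
  ((dotProductBilin ℝ ℝ μ).toContinuousLinearMap.map_tsum hsum).symm

theorem isBigO_deltaReward_sub {γ s M β : ℝ} {l : ℕ} {P : ℕ → ℝ → Matrix S S ℝ}
    {P₀ P₁ : Matrix S S ℝ} (hγ : 1 < γ) (hs : 0 ≤ s) (hl : 1 ≤ l) (hβ : β < 1)
    (hP : HasLinearDrift γ s P P₀ P₁) (hPM : ∀ᶠ ε in 𝓝[>] 0, ∀ k, ‖P (k + 1) ε‖ ≤ M)
    (hblock : ∀ᶠ ε in 𝓝[>] 0, ∀ k, ‖prodP (fun j => subB C (P (k + j) ε)) l‖ ≤ β)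
    (hunit : IsUnit (1 - subB C P₀)) (r : S → ℝ) (μ : C → ℝ) :
    (fun ε => deltaReward C μ r (fun k => P k ε) -
        (μ ⬝ᵥ ((1 - subB C P₀)⁻¹ *ᵥ rC C r P₀) +
          ε * (μ ⬝ᵥ ((subB C P₀ * (1 - subB C P₀)⁻¹ ^ 2 * subB C P₁ *
            (1 - subB C P₀)⁻¹) *ᵥ rC C r P₀)) +
          ε * (μ ⬝ᵥ ((subB C P₀ * (1 - subB C P₀)⁻¹ ^ 2) *ᵥ exitReward C r P₁))))
      =O[𝓝[>] 0] fun ε => ε ^ 2 * Real.log (1 / ε) ^ s := by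
  obtain ⟨MB, hMB⟩ := exists_norm_subB_le C M
  obtain ⟨MR, hMR⟩ := exists_norm_rC_le C M r
  have hBM : ∀ᶠ ε in 𝓝[>] 0, ∀ k, ‖subB C (P (k + 1) ε)‖ ≤ MB :=
    hPM.mono fun ε hε k => hMB _ (hε k)
  have hRM : ∀ᶠ ε in 𝓝[>] 0, ∀ k, ‖rC C r (P (k + 1) ε)‖ ≤ MR :=
    hPM.mono fun ε hε k => hMR _ (hε k)
  obtain ⟨K, ρ, hρ₀, hρ₁, hdecay⟩ := exists_eventually_norm_prodP_le_geometric
    (B := fun k ε => subB C (P k ε)) hl hβ hBM hblock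
  have hvector := isBigO_cumulatedReward_sub_inv hγ hs hρ₀ hρ₁ (hP.subB C) (hP.rC C r) hBM hRM
    hdecay hunit
  refine (((dotProductBilin ℝ ℝ μ).toContinuousLinearMap.isBigO_comp _ _).trans
    hvector).congr' ?_ .rfl
  filter_upwards [hRM, hdecay] with ε hRε hdecay
  rw [deltaReward_eq_dotProduct C μ r _ (summable_prodP_mulVec_of_bounded hρ₀ hρ₁ hdecay hRε)]
  simp only [LinearMap.coe_toContinuousLinearMap', dotProductBilin_apply_apply, dotProduct_sub,
    dotProduct_add, dotProduct_smul, smul_eq_mul]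
  ring

theorem hitting_reward_first_order_general
    (P : ℕ → ℝ → Matrix S S ℝ) (Pt Pt1 : Matrix S S ℝ)
    (l : ℕ) (hl : 1 ≤ l) (s δ : ℝ) (hs : 0 ≤ s) (hδ : 0 < δ)
    (hbdd : ∃ M : ℝ, ∀ k : ℕ, 1 ≤ k → ∀ ε : ℝ, 0 < ε → matNorm (P k ε) ≤ M)
    (hi : ∃ c > (0:ℝ), ∃ ε₀ > (0:ℝ), ∀ ε : ℝ, 0 < ε → ε < ε₀ →
      ∀ i : ℕ, 1 ≤ i → (i : ℝ) ≤ Real.log (1/ε) ^ (1 + δ) →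
        matNorm (P i ε - (Pt + (ε * ((i : ℝ) - 1)) • Pt1))
          ≤ c * ε ^ 2 * Real.log (1/ε) ^ s)
    (hii : ∃ β < (1:ℝ), ∀ k : ℕ, ∀ ε : ℝ, 0 < ε →
      matNorm (prodP (fun j => subB C (P (k + j) ε)) l) ≤ β)
    (r : S → ℝ) (μ : C → ℝ) :
    IsUnit (1 - subB C Pt) ∧
      ∃ c > (0:ℝ), ∃ ε₁ > (0:ℝ), ∀ ε : ℝ, 0 < ε → ε < ε₁ →
        |deltaReward C μ r (fun k => P k ε) -
            (μ ⬝ᵥ ((1 - subB C Pt)⁻¹ *ᵥ rC C r Pt) +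
              ε * (μ ⬝ᵥ ((subB C Pt * ((1 - subB C Pt)⁻¹) ^ 2 * subB C Pt1 *
                  (1 - subB C Pt)⁻¹) *ᵥ rC C r Pt)) +
              ε * (μ ⬝ᵥ ((subB C Pt * ((1 - subB C Pt)⁻¹) ^ 2) *ᵥ
                  fun x : C => ∑ y ∈ Finset.univ.filter (fun y => y ∉ C), Pt1 x.1 y * r y)))|
          ≤ c * ε ^ 2 * Real.log (1/ε) ^ s := by
  obtain ⟨M, hM⟩ := hbdd
  obtain ⟨β, hβ, hblock⟩ := hii
  simp only [matNorm_eq_norm] at hM hblock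
  have hP : HasLinearDrift (1 + δ) s P Pt Pt1 := hasLinearDrift_of_matNorm_le hi
  have hPM : ∀ᶠ ε in 𝓝[>] 0, ∀ k, ‖P (k + 1) ε‖ ≤ M :=
    eventually_mem_nhdsWithin.mono fun ε hε k => hM _ k.succ_pos ε hε
  have hBβ : ∀ᶠ ε in 𝓝[>] 0, ∀ k, ‖prodP (fun j => subB C (P (k + j) ε)) l‖ ≤ β :=
    eventually_mem_nhdsWithin.mono fun ε hε k => hblock k ε hε
  have hunit : IsUnit (1 - subB C Pt) := (hP.subB C).isUnit_one_sub (by positivity) hβ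
    (hBβ.mono fun ε hε => by simpa only [zero_add] using hε 0)
  refine ⟨hunit, ?_⟩
  have herror : ∀ᶠ ε : ℝ in 𝓝[>] 0, 0 ≤ ε ^ 2 * Real.log (1 / ε) ^ s :=
    (eventually_sq_le_sq_mul_log_one_div_rpow hs).mono fun ε => (sq_nonneg ε).trans
  obtain ⟨c, hc, ε₁, hε₁, hbound⟩ := exists_bound_of_isBigO_nhdsGT_zero
    (isBigO_deltaReward_sub C (lt_add_of_pos_right 1 hδ) hs hl hβ hP hPM hBβ hunit r μ) herror
  exact ⟨c, hc, ε₁, hε₁, fun ε hε hlt => (hbound ε hε hlt).trans_eq (mul_assoc _ _ _).symm⟩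

end HittingTime

end

/-- Theorem 3: first-order expansion of the expected reward cumulated to the
hitting time of Cᶜ, with error O(ε²(log(1/ε))^w) as ε ↓ 0. -/
theorem hitting_reward_first_order
    {S : Type*} [Fintype S] [Nonempty S] [DecidableEq S]
    (C : Set S) [DecidablePred (· ∈ C)] (hC : C ≠ Set.univ)
    (P : ℕ → ℝ → Matrix S S ℝ) (Pt Pt1 : Matrix S S ℝ)
    (l : ℕ) (hl : 1 ≤ l) (s δ : ℝ) (hs : 0 < s) (hδ : 0 < δ)
    (hstoch : ∀ k : ℕ, 1 ≤ k → ∀ ε : ℝ, 0 < ε → IsStochastic (P k ε))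
    (hi : ∃ c > (0:ℝ), ∃ ε₀ > (0:ℝ), ∀ ε : ℝ, 0 < ε → ε < ε₀ →
      ∀ i : ℕ, 1 ≤ i → (i : ℝ) ≤ Real.log (1/ε) ^ (1 + δ) →
        matNorm (P i ε - (Pt + (ε * ((i : ℝ) - 1)) • Pt1))
          ≤ c * ε ^ 2 * Real.log (1/ε) ^ s)
    (hii : ∃ β < (1:ℝ), ∀ k : ℕ, ∀ ε : ℝ, 0 < ε →
      matNorm (prodP (fun j => subB C (P (k + j) ε)) l) ≤ β)
    (r : S → ℝ) (μ : C → ℝ) (hμ0 : ∀ x, 0 ≤ μ x) (hμ1 : ∑ x, μ x = 1) :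
    IsUnit (1 - subB C Pt) ∧
      ∃ w : ℝ, ∃ c > (0:ℝ), ∃ ε₁ > (0:ℝ), ∀ ε : ℝ, 0 < ε → ε < ε₁ →
        |deltaReward C μ r (fun k => P k ε) -
            (μ ⬝ᵥ ((1 - subB C Pt)⁻¹ *ᵥ rC C r Pt) +
              ε * (μ ⬝ᵥ ((subB C Pt * ((1 - subB C Pt)⁻¹) ^ 2 * subB C Pt1 *
                  (1 - subB C Pt)⁻¹) *ᵥ rC C r Pt)) +
              ε * (μ ⬝ᵥ ((subB C Pt * ((1 - subB C Pt)⁻¹) ^ 2) *ᵥ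
                  fun x : C => ∑ y ∈ Finset.univ.filter (fun y => y ∉ C), Pt1 x.1 y * r y)))|
          ≤ c * ε ^ 2 * Real.log (1/ε) ^ w := by
  have hbdd : ∃ M : ℝ, ∀ k : ℕ, 1 ≤ k → ∀ ε : ℝ, 0 < ε → matNorm (P k ε) ≤ M :=
    ⟨1, fun k hk ε hε => (hstoch k hk ε hε).matNorm_le_one⟩
  exact (hitting_reward_first_order_general C P Pt Pt1 l hl s δ hs.le hδ hbdd hi hii r μ).imp_right
    fun hexpansion => ⟨s, hexpansion⟩
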